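/- Let 𝒴 ⊆ L^0(Ω,𝐅_T,P) be a finite-dimensional vector subspace containing ℝ^N_0. Then NCA(𝒴) holds if and only if ℳ_e(𝒴) ≠ ∅. -/

import Mathlib

open MeasureTheory Filter Topology

namespace CollectiveArb

variable {Ω : Type*}

/-- Terminal gains `K_i` of admissible (predictable) strategies for an agent with
filtration `F`, trading the assets indexed by `A`, over times `1,…,T`. -/
def gainsSet {J : ℕ} (F : ℕ → MeasurableSpace Ω) (T : ℕ)
    (A : Finset (Fin J)) (X : Fin J → ℕ → Ω → ℝ) : Set (Ω → ℝ) :=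
  { g | ∃ H : Fin J → ℕ → Ω → ℝ,
      (∀ j ∈ A, ∀ s, 1 ≤ s → s ≤ T → Measurable[F (s - 1)] (H j s)) ∧
      g = fun ω => ∑ j ∈ A, ∑ s ∈ Finset.Icc 1 T, H j s ω * (X j s ω - X j (s - 1) ω) }

/-- No collective arbitrage for the gains sets `K` and the exchange set `Y`:
`(K₁ × ⋯ × K_N + Y) ∩ L⁰₊ = {0}`. -/
def NCA {N : ℕ} [MeasurableSpace Ω] (P : Measure Ω)
    (K : Fin N → Set (Ω → ℝ)) (Y : Set (Fin N → Ω → ℝ)) : Prop :=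
  ∀ k : Fin N → Ω → ℝ, ∀ y ∈ Y, (∀ i, k i ∈ K i) →
    (∀ i, ∀ᵐ ω ∂P, 0 ≤ k i ω + y i ω) →
    ∀ i, (fun ω => k i ω + y i ω) =ᵐ[P] fun _ => (0 : ℝ)

/-- `K^𝒴 = ⨉ᵢ (Kᵢ − L⁰₊(ℱᵢ_T)) + 𝒴`. -/
def KY {N : ℕ} [MeasurableSpace Ω] (P : Measure Ω)
    (FT : Fin N → MeasurableSpace Ω)
    (K : Fin N → Set (Ω → ℝ)) (Y : Set (Fin N → Ω → ℝ)) : Set (Fin N → Ω → ℝ) :=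
  { f | ∃ (k l y : Fin N → Ω → ℝ), y ∈ Y ∧ (∀ i, k i ∈ K i) ∧
      (∀ i, Measurable[FT i] (l i) ∧ (∀ᵐ ω ∂P, 0 ≤ l i ω)) ∧
      ∀ i, f i = fun ω => k i ω - l i ω + y i ω }

/-- `ℝ^N_0`: zero-sum deterministic exchanges, viewed as constant random vectors. -/
def zeroSum (Ω : Type*) (N : ℕ) : Set (Fin N → Ω → ℝ) :=
  { y | ∃ x : Fin N → ℝ, (∑ i, x i) = 0 ∧ ∀ i, y i = fun _ => x i }

/-- `span(ℝ^N_0, Y_1, …, Y_R)`: the finite-dimensional space of exchanges generated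
by `ℝ^N_0` and the random vectors `Ys 1, …, Ys R`. -/
def spanExch {N R : ℕ} (Ys : Fin R → Fin N → Ω → ℝ) : Set (Fin N → Ω → ℝ) :=
  { y | ∃ (x : Fin N → ℝ) (c : Fin R → ℝ), (∑ i, x i) = 0 ∧
      ∀ i, y i = fun ω => x i + ∑ r, c r * Ys r i ω }

/-- `span(𝒴₀ ∪ {g})` for a vector subspace `𝒴₀`. -/
def spanWith {N : ℕ} (Y0 : Set (Fin N → Ω → ℝ)) (g : Fin N → Ω → ℝ) :
    Set (Fin N → Ω → ℝ) :=
  { y | ∃ w ∈ Y0, ∃ c : ℝ, ∀ i, y i = fun ω => w i ω + c * g i ω }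

/-- Equivalent martingale measures `Mᵢₑ` for the assets in `A`, w.r.t. the filtration `F`. -/
def martMeasures {J : ℕ} [MeasurableSpace Ω] (P : Measure Ω)
    (F : ℕ → MeasurableSpace Ω) (T : ℕ) (A : Finset (Fin J))
    (X : Fin J → ℕ → Ω → ℝ) : Set (Measure Ω) :=
  { Q | IsProbabilityMeasure Q ∧ Q ≪ P ∧ P ≪ Q ∧
      ∀ j ∈ A, (∀ t, t ≤ T → Integrable (X j t) Q) ∧
        ∀ s t, s ≤ t → t ≤ T → X j s =ᵐ[Q] Q[X j t | F s] }

/-- Equivalent collective martingale measures `ℳₑ(𝒴)`. -/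
def MeY {J N : ℕ} [MeasurableSpace Ω] (P : Measure Ω)
    (F : Fin N → ℕ → MeasurableSpace Ω) (T : ℕ) (assets : Fin N → Finset (Fin J))
    (X : Fin J → ℕ → Ω → ℝ) (Y : Set (Fin N → Ω → ℝ)) : Set (Fin N → Measure Ω) :=
  { Q | (∀ i, Q i ∈ martMeasures P (F i) T (assets i) X) ∧
      (∀ y ∈ Y, ∀ i, Integrable (y i) (Q i)) ∧
      ∀ y ∈ Y, (∑ i, ∫ ω, y i ω ∂(Q i)) ≤ 0 }

/-- `ℳ^φ_e(𝒴) = {Q ∈ ℳₑ(𝒴) : E_{Qⁱ}[|φⁱ|] < ∞ ∀ i}`. -/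
def MeYphi {J N : ℕ} [MeasurableSpace Ω] (P : Measure Ω)
    (F : Fin N → ℕ → MeasurableSpace Ω) (T : ℕ) (assets : Fin N → Finset (Fin J))
    (X : Fin J → ℕ → Ω → ℝ) (Y : Set (Fin N → Ω → ℝ))
    (φ : Fin N → Ω → ℝ) : Set (Fin N → Measure Ω) :=
  { Q | Q ∈ MeY P F T assets X Y ∧ ∀ i, Integrable (φ i) (Q i) }

/-- Closedness of a set of random vectors under componentwise `P`-a.s. convergence
of sequences (within `L⁰(Ω, 𝐅_T, P)`). -/
def ClosedAS {N : ℕ} [MeasurableSpace Ω] (P : Measure Ω)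
    (FT : Fin N → MeasurableSpace Ω) (S : Set (Fin N → Ω → ℝ)) : Prop :=
  ∀ (f : ℕ → Fin N → Ω → ℝ) (g : Fin N → Ω → ℝ),
    (∀ n, f n ∈ S) → (∀ i, Measurable[FT i] (g i)) →
    (∀ i, ∀ᵐ ω ∂P, Tendsto (fun n => f n i ω) atTop (𝓝 (g i ω))) →
    g ∈ S

/-- Collective superhedging price `ρ^𝒴₊(f)` (with `inf ∅ = +∞`). -/
noncomputable def rhoPlus {N : ℕ} [MeasurableSpace Ω] (P : Measure Ω)
    (K : Fin N → Set (Ω → ℝ)) (Y : Set (Fin N → Ω → ℝ))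
    (f : Fin N → Ω → ℝ) : EReal :=
  sInf { z : EReal | ∃ m : Fin N → ℝ, z = ((∑ i, m i : ℝ) : EReal) ∧
      ∃ k : Fin N → Ω → ℝ, (∀ i, k i ∈ K i) ∧ ∃ y ∈ Y,
        ∀ i, ∀ᵐ ω ∂P, f i ω ≤ m i + k i ω + y i ω }

/-- Collective subhedging price `ρ^𝒴₋(f)` (with `sup ∅ = −∞`). -/
noncomputable def rhoMinus {N : ℕ} [MeasurableSpace Ω] (P : Measure Ω)
    (K : Fin N → Set (Ω → ℝ)) (Y : Set (Fin N → Ω → ℝ))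
    (f : Fin N → Ω → ℝ) : EReal :=
  sSup { z : EReal | ∃ m : Fin N → ℝ, z = ((∑ i, m i : ℝ) : EReal) ∧
      ∃ k : Fin N → Ω → ℝ, (∀ i, k i ∈ K i) ∧ ∃ y ∈ Y,
        ∀ i, ∀ᵐ ω ∂P, m i + k i ω - y i ω ≤ f i ω }

/-- `ρ^𝒴₊(f)` is attained. -/
def rhoPlusAttained {N : ℕ} [MeasurableSpace Ω] (P : Measure Ω)
    (K : Fin N → Set (Ω → ℝ)) (Y : Set (Fin N → Ω → ℝ))
    (f : Fin N → Ω → ℝ) : Prop :=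
  ∃ (m : Fin N → ℝ) (k y : Fin N → Ω → ℝ), y ∈ Y ∧ (∀ i, k i ∈ K i) ∧
    (∀ i, ∀ᵐ ω ∂P, f i ω ≤ m i + k i ω + y i ω) ∧
    rhoPlus P K Y f = ((∑ i, m i : ℝ) : EReal)

/-- `ρ^𝒴₋(f)` is attained. -/
def rhoMinusAttained {N : ℕ} [MeasurableSpace Ω] (P : Measure Ω)
    (K : Fin N → Set (Ω → ℝ)) (Y : Set (Fin N → Ω → ℝ))
    (f : Fin N → Ω → ℝ) : Prop :=
  ∃ (m : Fin N → ℝ) (k y : Fin N → Ω → ℝ), y ∈ Y ∧ (∀ i, k i ∈ K i) ∧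
    (∀ i, ∀ᵐ ω ∂P, m i + k i ω - y i ω ≤ f i ω) ∧
    rhoMinus P K Y f = ((∑ i, m i : ℝ) : EReal)

/-- `f` is `𝒴`-collectively replicable: `f ∈ ℝ^N + (K₁ × ⋯ × K_N) + 𝒴` in `L⁰`. -/
def Replicable {N : ℕ} [MeasurableSpace Ω] (P : Measure Ω)
    (K : Fin N → Set (Ω → ℝ)) (Y : Set (Fin N → Ω → ℝ))
    (f : Fin N → Ω → ℝ) : Prop :=
  ∃ (m : Fin N → ℝ) (k y : Fin N → Ω → ℝ), y ∈ Y ∧ (∀ i, k i ∈ K i) ∧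
    ∀ i, f i =ᵐ[P] fun ω => m i + k i ω + y i ω

/-!
The `N` agents are glued into a single one on `Fin N × Ω`, whose information is given slicewise, and
an exchange `y ∈ 𝒴` becomes one more claim, traded with trivial information before the first date.

No arbitrage makes the cone `L + L⁰₊` of payoffs dominating an attainable one closed under almost
everywhere limits: adjoin the claims one at a time, the latest date first, and homogenise the
positions so that they converge along a measurable random subsequence. The Kreps–Yan argument in
`L²` then yields a positive density that annihilates `K₁ × ⋯ × K_N + 𝒴`. Its `N` slices have the
same mass because `ℝ^N_0 ⊆ 𝒴`, so normalising them into probability measures `Qⁱ` keeps both the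
martingale property and `∑ E_{Qⁱ}[yⁱ] = 0`.

Conversely, under a martingale measure a gain that is bounded below by an integrable variable is
integrable with mean zero, so a nonnegative element of `K₁ × ⋯ × K_N + 𝒴` has total mean at most
zero.
-/

/-- The convex cone `L + L⁰₊` of the payoffs that dominate some element of `L`. -/
def acceptable [MeasurableSpace Ω] (μ : Measure Ω) (L : Submodule ℝ (Ω → ℝ)) : Set (Ω → ℝ) :=
  {f | ∃ m ∈ L, m ≤ᵐ[μ] f}

/-- Sequential closedness of a set of random variables under almost everywhere convergence. -/
def AEClosed [MeasurableSpace Ω] (μ : Measure Ω) (S : Set (Ω → ℝ)) : Prop :=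
  ∀ (f : ℕ → Ω → ℝ) (g : Ω → ℝ), (∀ n, f n ∈ S) →
    (∀ᵐ ω ∂μ, Tendsto (fun n => f n ω) atTop (𝓝 (g ω))) → g ∈ S

/-- Absence of arbitrage in a space `L` of attainable payoffs: `L ∩ L⁰₊ = {0}`. -/
def NoArb [MeasurableSpace Ω] (μ : Measure Ω) (L : Submodule ℝ (Ω → ℝ)) : Prop :=
  ∀ m ∈ L, 0 ≤ᵐ[μ] m → m =ᵐ[μ] 0

/-- The payoffs `H ξ` with `H` measurable for `G`: the gains of trading one claim `ξ` on the
information `G`. -/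
def multiples (G : MeasurableSpace Ω) (ξ : Ω → ℝ) : Submodule ℝ (Ω → ℝ) where
  carrier := {f | ∃ H : Ω → ℝ, Measurable[G] H ∧ f = H * ξ}
  add_mem' := by
    rintro _ _ ⟨H, hH, rfl⟩ ⟨H', hH', rfl⟩
    exact ⟨H + H', hH.add hH', (add_mul _ _ _).symm⟩
  zero_mem' := ⟨0, measurable_const, (zero_mul _).symm⟩
  smul_mem' := by
    rintro c _ ⟨H, hH, rfl⟩
    exact ⟨c • H, hH.const_smul c, by rw [smul_mul_assoc]⟩

/-- Stability of a space of payoffs under scaling by `G`-measurable factors and under pasting along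
a countable `G`-measurable partition. -/
structure IsStable (G : MeasurableSpace Ω) (L : Submodule ℝ (Ω → ℝ)) : Prop where
  mul : ∀ g : Ω → ℝ, Measurable[G] g → ∀ m ∈ L, g * m ∈ L
  paste : ∀ τ : Ω → ℕ, Measurable[G] τ → ∀ f : ℕ → Ω → ℝ, (∀ n, f n ∈ L) →
    (fun ω => f (τ ω) ω) ∈ L

section Stability

variable {G G' : MeasurableSpace Ω} {L L' : Submodule ℝ (Ω → ℝ)}

lemma IsStable.mono (h : IsStable G L) (hG : G' ≤ G) : IsStable G' L :=
  ⟨fun g hg => h.mul g (hg.mono hG le_rfl), fun τ hτ => h.paste τ (hτ.mono hG le_rfl)⟩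

lemma isStable_bot (G : MeasurableSpace Ω) : IsStable G (⊥ : Submodule ℝ (Ω → ℝ)) where
  mul g _ m hm := by simp [(Submodule.mem_bot ℝ).1 hm]
  paste τ _ f hf := (Submodule.mem_bot ℝ).2 <| funext fun ω => by
    simp [(Submodule.mem_bot ℝ).1 (hf (τ ω))]

lemma isStable_multiples (G : MeasurableSpace Ω) (ξ : Ω → ℝ) : IsStable G (multiples G ξ) where
  mul := by
    rintro g hg _ ⟨H, hH, rfl⟩
    exact ⟨g * H, hg.mul hH, (mul_assoc _ _ _).symm⟩
  paste τ hτ f hf := by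
    choose H hH hfH using hf
    exact ⟨fun ω => H (τ ω) ω,
      (measurable_from_prod_countable_right (f := fun p : ℕ × Ω => H p.1 p.2) hH).comp
        (hτ.prodMk measurable_id), funext fun ω => congrFun (hfH (τ ω)) ω⟩

lemma IsStable.sup (h : IsStable G L) (h' : IsStable G L') : IsStable G (L ⊔ L') where
  mul g hg m hm := by
    obtain ⟨l, hl, l', hl', rfl⟩ := Submodule.mem_sup.1 hm
    rw [mul_add]
    exact Submodule.add_mem_sup (h.mul g hg l hl) (h'.mul g hg l' hl')
  paste τ hτ f hf := by
    choose l hl l' hl' hsum using fun n => Submodule.mem_sup.1 (hf n)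
    simp only [← hsum]
    exact Submodule.add_mem_sup (h.paste τ hτ l hl) (h'.paste τ hτ l' hl')

lemma IsStable.biSup {α : Type*} {s : Finset α} {M : α → Submodule ℝ (Ω → ℝ)}
    (h : ∀ a ∈ s, IsStable G (M a)) : IsStable G (⨆ a ∈ s, M a) := by
  classical
  induction s using Finset.induction_on with
  | empty => simpa using isStable_bot G
  | insert a s _ ih =>
    rw [Finset.iSup_insert]
    exact (h a (s.mem_insert_self a)).sup
      (ih fun b hb => h b (Finset.mem_insert_of_mem hb))

lemma exists_eq_const_of_measurable_bot {H : Ω → ℝ} (hH : Measurable[⊥] H) :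
    ∃ c : ℝ, H = fun _ => c := by
  rcases isEmpty_or_nonempty Ω with _ | _
  · exact ⟨0, Subsingleton.elim _ _⟩
  · exact stronglyMeasurable_bot_iff.1 hH.stronglyMeasurable

lemma multiples_bot (ξ : Ω → ℝ) : multiples ⊥ ξ = Submodule.span ℝ {ξ} := by
  ext f
  rw [Submodule.mem_span_singleton]
  constructor
  · rintro ⟨H, hH, rfl⟩
    obtain ⟨c, rfl⟩ := exists_eq_const_of_measurable_bot hH
    exact ⟨c, rfl⟩
  · rintro ⟨c, rfl⟩
    exact ⟨fun _ => c, measurable_const, rfl⟩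

lemma isStable_of_bot (L : Submodule ℝ (Ω → ℝ)) :
    IsStable (⊥ : MeasurableSpace Ω) L where
  mul g hg m hm := by
    obtain ⟨c, rfl⟩ := exists_eq_const_of_measurable_bot hg
    exact L.smul_mem c hm
  paste τ hτ f hf := by
    rcases isEmpty_or_nonempty Ω with _ | _
    · exact (Subsingleton.elim _ _ : (fun ω => f (τ ω) ω) = 0) ▸ L.zero_mem
    · obtain ⟨n, rfl⟩ := stronglyMeasurable_bot_iff.1 hτ.stronglyMeasurable
      exact hf n

end Stability

lemma exists_measurable_subseq [MeasurableSpace Ω] {v : ℕ → Ω → ℝ} (hv : ∀ n, Measurable (v n))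
    (hb : ∀ n ω, |v n ω| ≤ 1) :
    ∃ (w : Ω → ℝ) (τ : ℕ → Ω → ℕ), Measurable w ∧ (∀ k, Measurable (τ k)) ∧
      (∀ k ω, k ≤ τ k ω) ∧ ∀ ω, Tendsto (fun k => v (τ k ω) ω) atTop (𝓝 (w ω)) := by
  classical
  let w : Ω → ℝ := fun ω => liminf (fun n => v n ω) atTop
  have hw : Measurable w := Measurable.liminf hv
  have close : ∀ k ω, ∃ n, k ≤ n ∧ |v n ω - w ω| < 1 / ((k : ℝ) + 1) := by
    intro k ω
    have hε : (0 : ℝ) < 1 / ((k : ℝ) + 1) := by positivity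
    have below : IsBoundedUnder (· ≥ ·) atTop (fun n => v n ω) :=
      isBoundedUnder_of ⟨-1, fun n => (abs_le.1 (hb n ω)).1⟩
    have above : IsBoundedUnder (· ≤ ·) atTop (fun n => v n ω) :=
      isBoundedUnder_of ⟨1, fun n => (abs_le.1 (hb n ω)).2⟩
    have hlt : ∃ᶠ n in atTop, v n ω < w ω + 1 / ((k : ℝ) + 1) :=
      frequently_lt_of_liminf_lt above.isCoboundedUnder_ge (show w ω < _ by linarith)
    have hgt : ∀ᶠ n in atTop, w ω - 1 / ((k : ℝ) + 1) < v n ω :=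
      eventually_lt_of_lt_liminf (show _ < w ω by linarith) below
    obtain ⟨n, h₁, h₂, hkn⟩ := (hlt.and_eventually (hgt.and (eventually_ge_atTop k))).exists
    exact ⟨n, hkn, abs_lt.2 ⟨by linarith, by linarith⟩⟩
  refine ⟨w, fun k ω => Nat.find (close k ω), hw, fun k => ?_,
    fun k ω => (Nat.find_spec (close k ω)).1, fun ω => ?_⟩
  · exact measurable_find (close k) fun n => (MeasurableSet.const _).inter
      (measurableSet_lt ((hv n).sub hw).abs measurable_const)
  · rw [tendsto_iff_dist_tendsto_zero]
    exact squeeze_zero (fun _ => dist_nonneg) (fun k => (Nat.find_spec (close k ω)).2.le)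
      tendsto_one_div_add_atTop_nhds_zero_nat

section Closedness

variable {G : MeasurableSpace Ω} [MeasurableSpace Ω] {μ : Measure Ω}
  {L L' : Submodule ℝ (Ω → ℝ)} {f g ξ : Ω → ℝ}

lemma NoArb.mono (h : NoArb μ L') (hL : L ≤ L') : NoArb μ L := fun m hm => h m (hL hm)

lemma subset_acceptable : (L : Set (Ω → ℝ)) ⊆ acceptable μ L :=
  fun m hm => ⟨m, hm, EventuallyLE.rfl⟩

lemma add_mem_acceptable (hf : f ∈ acceptable μ L) (hg : g ∈ acceptable μ L) :
    f + g ∈ acceptable μ L := by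
  obtain ⟨m, hm, hmf⟩ := hf
  obtain ⟨m', hm', hmg⟩ := hg
  exact ⟨m + m', L.add_mem hm hm', hmf.add_le_add hmg⟩

lemma acceptable_congr (hfg : f =ᵐ[μ] g) (hf : f ∈ acceptable μ L) : g ∈ acceptable μ L := by
  obtain ⟨m, hm, hmf⟩ := hf
  exact ⟨m, hm, hmf.trans hfg.le⟩

lemma mem_acceptable_sup_multiples :
    f ∈ acceptable μ (L ⊔ multiples G ξ) ↔
      ∃ H : Ω → ℝ, Measurable[G] H ∧ f - H * ξ ∈ acceptable μ L := by
  constructor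
  · rintro ⟨_, hsup, hmf⟩
    obtain ⟨m, hm, _, ⟨H, hH, rfl⟩, rfl⟩ := Submodule.mem_sup.1 hsup
    exact ⟨H, hH, m, hm, hmf.mono fun ω hω => le_sub_iff_add_le.2 hω⟩
  · rintro ⟨H, hH, m, hm, hmf⟩
    exact ⟨m + H * ξ, Submodule.add_mem_sup hm ⟨H, hH, rfl⟩,
      hmf.mono fun ω hω => le_sub_iff_add_le.1 hω⟩

lemma IsStable.mul_mem_acceptable (h : IsStable G L) {c : Ω → ℝ} (hc : Measurable[G] c)
    (hc0 : 0 ≤ c) (hf : f ∈ acceptable μ L) : c * f ∈ acceptable μ L := by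
  obtain ⟨m, hm, hmf⟩ := hf
  exact ⟨c * m, h.mul c hc m hm, hmf.mono fun ω hω => mul_le_mul_of_nonneg_left hω (hc0 ω)⟩

lemma IsStable.paste_mem_acceptable (h : IsStable G L) {τ : Ω → ℕ} (hτ : Measurable[G] τ)
    {f : ℕ → Ω → ℝ} (hf : ∀ n, f n ∈ acceptable μ L) :
    (fun ω => f (τ ω) ω) ∈ acceptable μ L := by
  choose m hm hmf using hf
  exact ⟨_, h.paste τ hτ m hm, (ae_all_iff.2 hmf).mono fun ω hω => hω (τ ω)⟩

lemma aeClosed_acceptable_bot : AEClosed μ (acceptable μ ⊥) := by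
  intro f g hf hfg
  have hf0 : ∀ᵐ ω ∂μ, ∀ n, 0 ≤ f n ω := by
    refine ae_all_iff.2 fun n => ?_
    obtain ⟨m, hm, hmf⟩ := hf n
    rwa [(Submodule.mem_bot ℝ).1 hm] at hmf
  refine ⟨0, Submodule.zero_mem _, ?_⟩
  filter_upwards [hf0, hfg] with ω h0 hlim using ge_of_tendsto' hlim h0

-- The scaling `u = (1 + |H|)⁻¹` makes the coefficients `(u, u H)` of `(f, ξ)` bounded.
lemma IsStable.exists_homogenized_limit (h : IsStable G L) (hL : AEClosed μ (acceptable μ L))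
    {f : ℕ → Ω → ℝ} (hf : ∀ n, f n ∈ acceptable μ (L ⊔ multiples G ξ))
    (hfg : ∀ᵐ ω ∂μ, Tendsto (fun n => f n ω) atTop (𝓝 (g ω))) :
    ∃ w : Ω → ℝ, Measurable[G] w ∧ (∀ ω, |w ω| ≤ 1) ∧
      (fun ω => (1 - |w ω|) * g ω - w ω * ξ ω) ∈ acceptable μ L := by
  choose H hH hfH using fun n => mem_acceptable_sup_multiples.1 (hf n)
  let u : ℕ → Ω → ℝ := fun n ω => (1 + |H n ω|)⁻¹
  have hu0 : ∀ n ω, 0 < u n ω := fun n ω => by positivity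
  have hum : ∀ n, Measurable[G] (u n) := fun n => ((measurable_norm.comp (hH n)).const_add 1).inv
  have huH : ∀ n ω, 1 - |u n ω * H n ω| = u n ω := by
    intro n ω
    have : u n ω * (1 + |H n ω|) = 1 := inv_mul_cancel₀ (by positivity)
    rw [abs_mul, abs_of_pos (hu0 n ω)]
    linarith
  have huH1 : ∀ n ω, |u n ω * H n ω| ≤ 1 := fun n ω => by linarith [huH n ω, hu0 n ω]
  obtain ⟨w, τ, hw, hτ, hkτ, hlim⟩ := @exists_measurable_subseq Ω G (fun n ω => u n ω * H n ω)
    (fun n => (hum n).mul (hH n)) huH1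
  refine ⟨w, hw, fun ω => le_of_tendsto' (hlim ω).abs fun k => huH1 _ ω, ?_⟩
  refine hL (fun k ω => u (τ k ω) ω * (f (τ k ω) ω - H (τ k ω) ω * ξ ω)) _
    (fun k => h.paste_mem_acceptable (hτ k)
      fun n => h.mul_mem_acceptable (hum n) (fun ω => (hu0 n ω).le) (hfH n)) ?_
  filter_upwards [hfg] with ω hω
  have hu : Tendsto (fun k => u (τ k ω) ω) atTop (𝓝 (1 - |w ω|)) := by
    simpa only [huH] using (hlim ω).abs.const_sub 1
  have hfτ : Tendsto (fun k => f (τ k ω) ω) atTop (𝓝 (g ω)) :=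
    hω.comp (tendsto_atTop_mono (fun k => hkτ k ω) tendsto_id)
  simpa only [mul_sub, mul_assoc] using (hu.mul hfτ).sub ((hlim ω).mul_const (ξ ω))

lemma IsStable.indicator_limit_mem_acceptable (h : IsStable G L)
    (hL : AEClosed μ (acceptable μ L)) {f : ℕ → Ω → ℝ}
    (hf : ∀ n, f n ∈ acceptable μ (L ⊔ multiples G ξ))
    (hfg : ∀ᵐ ω ∂μ, Tendsto (fun n => f n ω) atTop (𝓝 (g ω)))
    {B : Set Ω} (hB : MeasurableSet[G] B) {m : Ω → ℝ} (hm : m ∈ L)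
    (hξ : ∀ᵐ ω ∂μ, ω ∈ B → ξ ω = m ω) :
    B.indicator 1 * g ∈ acceptable μ L := by
  choose H hH hfH using fun n => mem_acceptable_sup_multiples.1 (hf n)
  have hb : Measurable[G] (B.indicator (1 : Ω → ℝ)) := Measurable.indicator measurable_const hB
  refine hL (fun n => B.indicator 1 * f n) _ (fun n => ?_)
    (hfg.mono fun ω hω => hω.const_mul _)
  have hscaled := h.mul_mem_acceptable hb (Set.indicator_nonneg fun _ _ => zero_le_one) (hfH n)
  have hrest := subset_acceptable (μ := μ) (h.mul _ (hb.mul (hH n)) m hm)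
  refine acceptable_congr ?_ (add_mem_acceptable hscaled hrest)
  filter_upwards [hξ] with ω hω
  by_cases hωB : ω ∈ B <;> simp [hωB]
  simp [hω hωB]

-- Where `|w| = 1` and `m ≤ -w ξ`, the payoff `-m - w ξ` would be an arbitrage unless it vanishes.
lemma IsStable.ae_eq_neg_mul_of_noArb (h : IsStable G L) (hna : NoArb μ (L ⊔ multiples G ξ))
    {B : Set Ω} (hB : MeasurableSet[G] B) {w m : Ω → ℝ} (hw : Measurable[G] w)
    (hwB : ∀ ω ∈ B, |w ω| = 1) (hm : m ∈ L) (hle : ∀ᵐ ω ∂μ, ω ∈ B → m ω ≤ -(w ω * ξ ω)) :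
    ∀ᵐ ω ∂μ, ω ∈ B → ξ ω = (-w * m) ω := by
  have hb : Measurable[G] (B.indicator (1 : Ω → ℝ)) := Measurable.indicator measurable_const hB
  have hnull : B.indicator 1 * (-m) + -(B.indicator 1 * w) * ξ =ᵐ[μ] 0 := by
    refine hna _ (Submodule.add_mem_sup (h.mul _ hb _ (L.neg_mem hm))
      ⟨_, (hb.mul hw).neg, rfl⟩) ?_
    filter_upwards [hle] with ω hω
    by_cases hωB : ω ∈ B
    · simp [hωB]
      linarith [hω hωB]
    · simp [hωB]
  filter_upwards [hnull] with ω hω hωB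
  have hw2 : w ω * w ω = 1 := by rw [← abs_mul_abs_self, hwB ω hωB, one_mul]
  simp only [Pi.add_apply, Pi.mul_apply, Pi.neg_apply, Set.indicator_of_mem hωB, Pi.one_apply,
    Pi.zero_apply] at hω ⊢
  linear_combination -w ω * hω - ξ ω * hw2

-- Where the homogenised limit has no component along `f`, absence of arbitrage shows that trading
-- `ξ` is redundant; elsewhere dividing by that component recovers `g`.
lemma IsStable.aeClosed_acceptable_sup_multiples (h : IsStable G L)
    (hL : AEClosed μ (acceptable μ L)) (hna : NoArb μ (L ⊔ multiples G ξ)) :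
    AEClosed μ (acceptable μ (L ⊔ multiples G ξ)) := by
  intro f g hf hfg
  obtain ⟨w, hw, hw1, m, hm, hmle⟩ := h.exists_homogenized_limit hL hf hfg
  let a : Ω → ℝ := fun ω => 1 - |w ω|
  let B : Set Ω := {ω | a ω = 0}
  have ha : Measurable[G] a := (measurable_norm.comp hw).const_sub 1
  have hB : MeasurableSet[G] B := ha (measurableSet_singleton 0)
  have hwB : ∀ ω ∈ B, |w ω| = 1 := fun ω hω => (sub_eq_zero.1 hω).symm
  have hredundant : ∀ᵐ ω ∂μ, ω ∈ B → ξ ω = (-w * m) ω :=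
    h.ae_eq_neg_mul_of_noArb hna hB hw hwB hm <| hmle.mono fun ω hω hωB => by
      simpa [hwB ω hωB] using hω
  have hBg := h.indicator_limit_mem_acceptable hL hf hfg hB (h.mul _ hw.neg m hm) hredundant
  have hag := h.mul_mem_acceptable ha.inv
    (fun ω => inv_nonneg.2 (sub_nonneg.2 (hw1 ω))) ⟨m, hm, hmle⟩
  refine mem_acceptable_sup_multiples.2 ⟨a⁻¹ * w, ha.inv.mul hw, ?_⟩
  convert add_mem_acceptable hag hBg using 1
  funext ω
  by_cases hωB : ω ∈ B
  · simp [hωB, show a ω = 0 from hωB]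
  · have : a ω ≠ 0 := hωB
    simp only [Pi.sub_apply, Pi.add_apply, Pi.mul_apply, Pi.inv_apply,
      Set.indicator_of_notMem hωB, zero_mul, add_zero]
    field_simp
    rfl

lemma aeClosed_acceptable_sup_of_fg (hL : AEClosed μ (acceptable μ L))
    {V : Submodule ℝ (Ω → ℝ)} (hV : V.FG) (hna : NoArb μ (L ⊔ V)) :
    AEClosed μ (acceptable μ (L ⊔ V)) := by
  induction V, hV using Submodule.fg_induction generalizing L with
  | singleton ξ =>
    rw [← multiples_bot] at hna ⊢
    exact (isStable_of_bot L).aeClosed_acceptable_sup_multiples hL hna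
  | sup V₁ V₂ _ _ ih₁ ih₂ =>
    rw [← sup_assoc] at hna ⊢
    exact ih₂ (ih₁ hL (hna.mono le_sup_left)) hna

-- Later claims are adjoined first, so that the claims already present are stable under scaling by
-- the information available at the date of the new one.
lemma aeClosed_acceptable_biSup_multiples {α β : Type*} [LinearOrder β] (s : Finset α)
    (τ : α → β) {𝔾 : β → MeasurableSpace Ω} (h𝔾 : Monotone 𝔾) (ξ : α → Ω → ℝ)
    (hna : NoArb μ (⨆ a ∈ s, multiples (𝔾 (τ a)) (ξ a))) :
    AEClosed μ (acceptable μ (⨆ a ∈ s, multiples (𝔾 (τ a)) (ξ a))) := by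
  classical
  induction s using Finset.induction_on_min_value τ with
  | empty => simpa using aeClosed_acceptable_bot
  | insert a s _ hmin ih =>
    rw [Finset.iSup_insert, sup_comm] at hna ⊢
    exact (IsStable.biSup fun b hb =>
      (isStable_multiples _ _).mono (h𝔾 (hmin b hb))).aeClosed_acceptable_sup_multiples
      (ih (hna.mono le_sup_left)) hna

end Closedness

section KrepsYan

variable [MeasurableSpace Ω] {μ : Measure Ω}

lemma exists_mem_forall_pos_of_seq {p : ENNReal} [Fact (1 ≤ p)] {C : ProperCone ℝ (Lp ℝ p μ)}
    (hC : ∀ z ∈ C, 0 ≤ z) {z : ℕ → Lp ℝ p μ} (hz : ∀ n, z n ∈ C) :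
    ∃ Z ∈ C, ∀ n, ∀ᵐ ω ∂μ, 0 < z n ω → 0 < Z ω := by
  let c : ℕ → ℝ := fun n => (1 / 2) ^ n * (1 + ‖z n‖)⁻¹
  have hc : ∀ n, 0 < c n := fun n => by positivity
  have hmem : ∀ n, c n • z n ∈ C := fun n => C.smul_mem (hz n) (hc n).le
  have hsum : Summable fun n => c n • z n := by
    refine Summable.of_norm_bounded summable_geometric_two fun n => ?_
    rw [norm_smul, Real.norm_of_nonneg (hc n).le, mul_assoc]
    refine mul_le_of_le_one_right (by positivity) ?_
    rw [inv_mul_le_one₀ (by positivity)]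
    linarith
  refine ⟨∑' n, c n • z n, C.isClosed.mem_of_tendsto hsum.hasSum
    (Eventually.of_forall fun s => C.toSubmodule.sum_mem fun n _ => hmem n), fun n => ?_⟩
  have hle : c n • z n ≤ ∑' k, c k • z k :=
    le_hasSum hsum.hasSum n fun k _ => hC _ (hmem k)
  filter_upwards [(Lp.coeFn_le _ _).2 hle, Lp.coeFn_smul (c n) (z n)] with ω hleω hsmul hpos
  refine lt_of_lt_of_le ?_ hleω
  rw [hsmul]
  exact mul_pos (hc n) hpos

lemma indicatorConstLp_one_nonneg {p : ENNReal} {s : Set Ω} (hs : MeasurableSet s)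
    (hμs : μ s ≠ ⊤) : 0 ≤ indicatorConstLp p hs hμs (1 : ℝ) := by
  rw [← Lp.coeFn_nonneg]
  filter_upwards [indicatorConstLp_coeFn (p := p) (hs := hs) (hμs := hμs) (c := (1 : ℝ))]
    with ω hω
  rw [hω]
  exact Set.indicator_nonneg (fun _ _ => zero_le_one) ω

variable [IsFiniteMeasure μ]

-- An element whose support has maximal measure; adding any other element cannot enlarge it.
lemma exists_mem_maximal_support {p : ENNReal} [Fact (1 ≤ p)] {C : ProperCone ℝ (Lp ℝ p μ)}
    (hC : ∀ z ∈ C, 0 ≤ z) : ∃ Z ∈ C, ∀ z ∈ C, ∀ᵐ ω ∂μ, 0 < z ω → 0 < Z ω := by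
  let S : Set ENNReal := (fun z : Lp ℝ p μ => μ {ω | 0 < z ω}) '' C
  obtain ⟨r, -, hr, hrS⟩ :=
    exists_seq_tendsto_sSup (C.nonempty.image _ : S.Nonempty) (OrderTop.bddAbove S)
  choose z hz hzr using hrS
  obtain ⟨Z, hZ, hzZ⟩ := exists_mem_forall_pos_of_seq hC hz
  have hmax : ∀ y ∈ C, μ {ω | 0 < y ω} ≤ μ {ω | 0 < Z ω} := fun y hy =>
    (le_sSup (Set.mem_image_of_mem _ hy)).trans
      (le_of_tendsto' hr fun n => (hzr n).symm.trans_le (measure_mono_ae (hzZ n)))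
  refine ⟨Z, hZ, fun y hy => ?_⟩
  have hsum : ∀ᵐ ω ∂μ, 0 < Z ω ∨ 0 < y ω → 0 < (Z + y : Lp ℝ p μ) ω := by
    filter_upwards [Lp.coeFn_add Z y, (Lp.coeFn_nonneg Z).2 (hC Z hZ),
      (Lp.coeFn_nonneg y).2 (hC y hy)] with ω hadd hZω hyω hpos
    rw [hadd]
    exact hpos.elim (fun h => add_pos_of_pos_of_nonneg h hyω)
      (fun h => add_pos_of_nonneg_of_pos hZω h)
  have hle : μ ({ω | 0 < Z ω} ∪ {ω | 0 < y ω}) ≤ μ {ω | 0 < Z ω} :=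
    (measure_mono_ae hsum).trans (hmax _ (C.toSubmodule.add_mem hZ hy))
  have hmeas : MeasurableSet {ω | 0 < Z ω} :=
    measurableSet_lt measurable_const (Lp.stronglyMeasurable Z).measurable
  have heq := ae_eq_of_subset_of_measure_ge Set.subset_union_left hle hmeas.nullMeasurableSet
    (measure_ne_top _ _)
  filter_upwards [heq.mem_iff] with ω hω hyω using hω.2 (Or.inr hyω)

lemma nonneg_of_mem_innerDual {C : Set (Lp ℝ 2 μ)} (hC : ∀ f, 0 ≤ f → f ∈ C) {z : Lp ℝ 2 μ}
    (hz : z ∈ ProperCone.innerDual C) : 0 ≤ z := by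
  rw [← Lp.coeFn_nonneg]
  refine ae_nonneg_of_forall_setIntegral_nonneg ((Lp.memLp z).integrable one_le_two)
    fun s hs hμs => ?_
  rw [← L2.inner_indicatorConstLp_one hs hμs.ne]
  exact hz (hC _ (indicatorConstLp_one_nonneg hs hμs.ne))

theorem exists_pos_mem_innerDual {C : ProperCone ℝ (Lp ℝ 2 μ)} (hC : ∀ f, 0 ≤ f → f ∈ C)
    (hna : ∀ f ∈ C, f ≤ 0 → f = 0) :
    ∃ z ∈ ProperCone.innerDual (C : Set (Lp ℝ 2 μ)), ∀ᵐ ω ∂μ, 0 < z ω := by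
  obtain ⟨Z, hZ, hmax⟩ := exists_mem_maximal_support
    (C := ProperCone.innerDual (C : Set (Lp ℝ 2 μ))) fun z hz => nonneg_of_mem_innerDual hC hz
  refine ⟨Z, hZ, ?_⟩
  have hA : MeasurableSet {ω | 0 < Z ω}ᶜ :=
    (measurableSet_lt measurable_const (Lp.stronglyMeasurable Z).measurable).compl
  let e : Lp ℝ 2 μ := indicatorConstLp 2 hA (measure_ne_top μ _) 1
  have he : 0 ≤ e := indicatorConstLp_one_nonneg hA _
  have hmem : -e ∈ C := by
    by_contra hmem
    obtain ⟨y, hy, hneg⟩ := C.hyperplane_separation' hmem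
    rw [inner_neg_left, neg_lt_zero, L2.inner_indicatorConstLp_one] at hneg
    refine hneg.not_ge (setIntegral_nonpos_ae hA ?_)
    filter_upwards [hmax y hy] with ω hω hωA using not_lt.1 fun hyω => hωA (hω hyω)
  have he0 : e =ᵐ[μ] 0 := by
    rw [neg_eq_zero.1 (hna _ hmem (neg_nonpos.2 he))]
    exact Lp.coeFn_zero ℝ 2 μ
  filter_upwards [he0, indicatorConstLp_coeFn (p := 2) (hs := hA)
    (hμs := measure_ne_top μ _) (c := (1 : ℝ))] with ω h₀ h₁
  by_contra hω
  rw [h₁, Set.indicator_of_mem hω] at h₀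
  exact one_ne_zero h₀

/-- The closed convex cone of the square-integrable members of `acceptable μ L`. -/
noncomputable def acceptableLp {L : Submodule ℝ (Ω → ℝ)} (hL : AEClosed μ (acceptable μ L)) :
    ProperCone ℝ (Lp ℝ 2 μ) where
  carrier := {f | ⇑f ∈ acceptable μ L}
  add_mem' := fun {f g} hf hg => acceptable_congr (Lp.coeFn_add f g).symm
    (add_mem_acceptable hf hg)
  zero_mem' := acceptable_congr (Lp.coeFn_zero ℝ 2 μ).symm (subset_acceptable L.zero_mem)
  smul_mem' c f hf := acceptable_congr (Lp.coeFn_smul (c : ℝ) f).symm <|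
    (isStable_of_bot L).mul_mem_acceptable (c := fun _ => (c : ℝ)) measurable_const
      (fun _ => c.2) hf
  isClosed' := by
    refine isClosed_of_closure_subset fun g hg => ?_
    obtain ⟨f, hf, hfg⟩ := mem_closure_iff_seq_limit.1 hg
    obtain ⟨ns, -, hns⟩ := (tendstoInMeasure_of_tendsto_Lp hfg).exists_seq_tendsto_ae
    exact hL (fun k => f (ns k)) g (fun k => hf (ns k)) hns

theorem exists_pos_annihilator {L : Submodule ℝ (Ω → ℝ)} (hL : AEClosed μ (acceptable μ L))
    (hna : NoArb μ L) :
    ∃ z : Ω → ℝ, MemLp z 2 μ ∧ (∀ᵐ ω ∂μ, 0 < z ω) ∧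
      ∀ m ∈ L, MemLp m 2 μ → ∫ ω, z ω * m ω ∂μ = 0 := by
  have hpos : ∀ f : Lp ℝ 2 μ, 0 ≤ f → f ∈ acceptableLp hL := fun f hf =>
    ⟨0, L.zero_mem, (Lp.coeFn_nonneg f).2 hf⟩
  have harb : ∀ f ∈ acceptableLp hL, f ≤ 0 → f = 0 := by
    rintro f ⟨m, hm, hmf⟩ hf
    have hf' : f ≤ᵐ[μ] 0 := ((Lp.coeFn_le f 0).2 hf).trans (Lp.coeFn_zero ℝ 2 μ).le
    have hm0 : -m =ᵐ[μ] 0 := hna (-m) (L.neg_mem hm) <| by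
      filter_upwards [hmf, hf'] with ω h₁ h₂ using neg_nonneg.2 (h₁.trans h₂)
    refine (Lp.eq_zero_iff_ae_eq_zero).2 ?_
    filter_upwards [hm0, hmf, hf'] with ω h₀ h₁ h₂
    exact le_antisymm h₂ ((neg_eq_zero.1 h₀).symm.le.trans h₁)
  obtain ⟨z, hz, hz0⟩ := exists_pos_mem_innerDual hpos harb
  have hint : ∀ m ∈ L, MemLp m 2 μ → 0 ≤ ∫ ω, z ω * m ω ∂μ := by
    intro m hm hm2
    have h := hz (x := hm2.toLp m) ⟨m, hm, hm2.coeFn_toLp.symm.le⟩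
    refine h.trans_eq ((L2.inner_def _ _).trans (integral_congr_ae ?_))
    filter_upwards [hm2.coeFn_toLp] with ω hω
    simp [hω]
  refine ⟨z, Lp.memLp z, hz0, fun m hm hm2 => le_antisymm ?_ (hint m hm hm2)⟩
  simpa [integral_neg] using hint (-m) (L.neg_mem hm) hm2.neg

end KrepsYan

section GeneralizedMartingales

variable {G m0 : MeasurableSpace Ω} {Q : Measure Ω} [IsFiniteMeasure Q]

lemma lintegral_mul_condLExp (hG : G ≤ m0) {φ f : Ω → ENNReal} (hφ : Measurable[G] φ)
    (hf : AEMeasurable f Q) : ∫⁻ ω, φ ω * Q⁻[f|G] ω ∂Q = ∫⁻ ω, φ ω * f ω ∂Q := by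
  have htrim : (Q.withDensity Q⁻[f|G]).trim hG = (Q.withDensity f).trim hG := by
    refine @Measure.ext _ G _ _ fun s hs => ?_
    rw [trim_measurableSet_eq hG hs, trim_measurableSet_eq hG hs,
      withDensity_apply _ (hG s hs), withDensity_apply _ (hG s hs), setLIntegral_condLExp hG Q f hs]
  have hcond : AEMeasurable Q⁻[f|G] Q := (measurable_condLExp' G Q f).aemeasurable
  have hφ0 : AEMeasurable φ Q := (hφ.mono hG le_rfl).aemeasurable
  calc ∫⁻ ω, φ ω * Q⁻[f|G] ω ∂Q
      = ∫⁻ ω, φ ω ∂(Q.withDensity Q⁻[f|G]) := by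
        rw [lintegral_withDensity_eq_lintegral_mul₀ hcond hφ0]
        simp only [Pi.mul_apply, mul_comm]
    _ = ∫⁻ ω, φ ω ∂(Q.withDensity f) := by
        rw [← lintegral_trim hG hφ, htrim, lintegral_trim hG hφ]
    _ = ∫⁻ ω, φ ω * f ω ∂Q := by
        rw [lintegral_withDensity_eq_lintegral_mul₀ hf hφ0]
        simp only [Pi.mul_apply, mul_comm]

lemma integrable_of_condExp_mul_eq (hG : G ≤ m0) {U f g : Ω → ℝ} (hU : Measurable[G] U)
    (hU0 : ∀ ω, 0 < U ω) (hf0 : 0 ≤ᵐ[Q] f) (hUf : Integrable (U * f) Q)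
    (hcond : Q[U * f | G] =ᵐ[Q] U * g) (hg : Integrable g Q) :
    Integrable f Q ∧ ∫ ω, f ω ∂Q = ∫ ω, g ω ∂Q := by
  have hUf0 : 0 ≤ᵐ[Q] U * f := hf0.mono fun ω hω => mul_nonneg (hU0 ω).le hω
  have hg0 : 0 ≤ᵐ[Q] g := by
    filter_upwards [condExp_nonneg (m := G) hUf0, hcond] with ω h₁ h₂
    rw [h₂] at h₁
    exact nonneg_of_mul_nonneg_right h₁ (hU0 ω)
  have hcancel : ∀ (h : Ω → ℝ) ω,
      ENNReal.ofReal (U ω)⁻¹ * ENNReal.ofReal ((U * h) ω) = ENNReal.ofReal (h ω) := by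
    intro h ω
    rw [← ENNReal.ofReal_mul (inv_nonneg.2 (hU0 ω).le), Pi.mul_apply,
      inv_mul_cancel_left₀ (hU0 ω).ne']
  have hlint : ∫⁻ ω, ENNReal.ofReal (f ω) ∂Q = ∫⁻ ω, ENNReal.ofReal (g ω) ∂Q := by
    have hφ : Measurable[G] fun ω => ENNReal.ofReal (U ω)⁻¹ := hU.inv.ennreal_ofReal
    simp_rw [← hcancel f, ← hcancel g]
    rw [← lintegral_mul_condLExp hG hφ hUf.aemeasurable.ennreal_ofReal]
    refine lintegral_congr_ae ?_
    filter_upwards [condLExp_ofReal G hUf hUf0, hcond] with ω h₁ h₂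
    rw [h₁, h₂]
  have hfm : AEStronglyMeasurable f Q := by
    refine ((hU.inv.mono hG le_rfl).aestronglyMeasurable.mul hUf.aestronglyMeasurable).congr
      (ae_of_all _ fun ω => ?_)
    exact inv_mul_cancel_left₀ (hU0 ω).ne' (f ω)
  refine ⟨⟨hfm, ?_⟩, ?_⟩
  · rw [hasFiniteIntegral_iff_ofReal hf0, hlint, ← hasFiniteIntegral_iff_ofReal hg0]
    exact hg.2
  · rw [integral_eq_lintegral_of_nonneg_ae hf0 hfm,
      integral_eq_lintegral_of_nonneg_ae hg0 hg.aestronglyMeasurable, hlint]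

/-- One step `V, W` of a generalized martingale: `V` is `G`-measurable and, after deflation by some
`G`-measurable `U` with values in `(0, 1]`, the increment `W - V` is integrable with vanishing
conditional expectation. -/
def IsGenMartingaleStep (G : MeasurableSpace Ω) [MeasurableSpace Ω] (Q : Measure Ω)
    (V W : Ω → ℝ) : Prop :=
  Measurable[G] V ∧ ∃ U : Ω → ℝ, Measurable[G] U ∧ (∀ ω, 0 < U ω) ∧ (∀ ω, U ω ≤ 1) ∧
    Integrable (U * V) Q ∧ Integrable (U * (W - V)) Q ∧ Q[U * (W - V) | G] =ᵐ[Q] 0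

lemma IsGenMartingaleStep.exists_deflated_condExp (hG : G ≤ m0) {V W Z : Ω → ℝ}
    (h : IsGenMartingaleStep G Q V W) (hZ : Integrable Z Q) :
    ∃ U : Ω → ℝ, Measurable[G] U ∧ (∀ ω, 0 < U ω) ∧ Integrable (U * (W + Z)) Q ∧
      Q[U * (W + Z) | G] =ᵐ[Q] U * (V + Q[Z | G]) := by
  obtain ⟨hV, U, hU, hU0, hU1, hUV, hUD, hcond⟩ := h
  have hUZ : Integrable (U * Z) Q :=
    hZ.bdd_mul (c := 1) (hU.mono hG le_rfl).aestronglyMeasurable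
      (ae_of_all _ fun ω => by rw [Real.norm_of_nonneg (hU0 ω).le]; exact hU1 ω)
  have hsplit : U * (W + Z) = U * V + U * (W - V) + U * Z := by ring
  refine ⟨U, hU, hU0, hsplit ▸ (hUV.add hUD).add hUZ, ?_⟩
  rw [hsplit]
  filter_upwards [condExp_add (hUV.add hUD) hUZ G, condExp_add hUV hUD G, hcond,
    condExp_mul_of_stronglyMeasurable_left (μ := Q) hU.stronglyMeasurable hUZ hZ]
    with ω hadd hadd' hD hpull
  rw [hadd, Pi.add_apply, hadd', Pi.add_apply, hD, hpull,
    condExp_of_stronglyMeasurable hG (hU.mul hV).stronglyMeasurable hUV]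
  simp [mul_add]

lemma IsGenMartingaleStep.neg_condExp_le (hG : G ≤ m0) {V W Z : Ω → ℝ}
    (h : IsGenMartingaleStep G Q V W) (hZ : Integrable Z Q) (hle : -Z ≤ᵐ[Q] W) :
    -Q[Z | G] ≤ᵐ[Q] V := by
  obtain ⟨U, -, hU0, -, hcond⟩ := h.exists_deflated_condExp hG hZ
  have hnonneg : 0 ≤ᵐ[Q] U * (W + Z) :=
    hle.mono fun ω hω => mul_nonneg (hU0 ω).le (neg_le_iff_add_nonneg.1 hω)
  filter_upwards [condExp_nonneg (m := G) hnonneg, hcond] with ω h₁ h₂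
  rw [h₂] at h₁
  exact neg_le_iff_add_nonneg.2 (nonneg_of_mul_nonneg_right h₁ (hU0 ω))

lemma IsGenMartingaleStep.integrable_of_neg_le (hG : G ≤ m0) {V W Z : Ω → ℝ}
    (h : IsGenMartingaleStep G Q V W) (hZ : Integrable Z Q) (hle : -Z ≤ᵐ[Q] W)
    (hV : Integrable V Q) : Integrable W Q ∧ ∫ ω, W ω ∂Q = ∫ ω, V ω ∂Q := by
  obtain ⟨U, hU, hU0, hUint, hcond⟩ := h.exists_deflated_condExp hG hZ
  obtain ⟨hint, heq⟩ := integrable_of_condExp_mul_eq (f := W + Z) hG hU hU0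
    (hle.mono fun ω hω => neg_le_iff_add_nonneg.1 hω) hUint hcond (hV.add integrable_condExp)
  have hW : Integrable W Q := by simpa using hint.sub hZ
  refine ⟨hW, ?_⟩
  rw [integral_add' hW hZ, integral_add' hV integrable_condExp, integral_condExp hG] at heq
  linarith

theorem integrable_of_forall_isGenMartingaleStep {F : ℕ → MeasurableSpace Ω}
    (hF : ∀ t, F t ≤ m0) {V : ℕ → Ω → ℝ} (h0 : Integrable (V 0) Q) {T : ℕ}
    (hV : ∀ t < T, IsGenMartingaleStep (F t) Q (V t) (V (t + 1))) {Z : Ω → ℝ}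
    (hZ : Integrable Z Q) (hle : -Z ≤ᵐ[Q] V T) :
    Integrable (V T) Q ∧ ∫ ω, V T ω ∂Q = ∫ ω, V 0 ω ∂Q := by
  induction T generalizing Z with
  | zero => exact ⟨h0, rfl⟩
  | succ T ih =>
    have step := hV T T.lt_succ_self
    obtain ⟨hint, heq⟩ := ih (fun t ht => hV t (ht.trans T.lt_succ_self)) integrable_condExp
      (step.neg_condExp_le (hF T) hZ hle)
    obtain ⟨hint', heq'⟩ := step.integrable_of_neg_le (hF T) hZ hle hint
    exact ⟨hint', heq'.trans heq⟩

-- The deflator `(1 + |V| + ∑ |H j|)⁻¹` bounds `V` and every `H j`.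
lemma isGenMartingaleStep_add_sum {ι : Type*} (hG : G ≤ m0) {V : Ω → ℝ} (hV : Measurable[G] V)
    (A : Finset ι) {H ξ : ι → Ω → ℝ} (hH : ∀ j ∈ A, Measurable[G] (H j))
    (hξ : ∀ j ∈ A, Integrable (ξ j) Q) (hξ0 : ∀ j ∈ A, Q[ξ j | G] =ᵐ[Q] 0) :
    IsGenMartingaleStep G Q V (V + ∑ j ∈ A, H j * ξ j) := by
  let U : Ω → ℝ := fun ω => (1 + |V ω| + ∑ j ∈ A, |H j ω|)⁻¹
  have hsum : ∀ ω, 0 ≤ ∑ j ∈ A, |H j ω| := fun ω => Finset.sum_nonneg fun _ _ => abs_nonneg _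
  have hU0 : ∀ ω, 0 < U ω := fun ω => inv_pos.2 (by have := hsum ω; positivity)
  have hU : Measurable[G] U := (((measurable_norm.comp hV).const_add 1).add
    (Finset.measurable_fun_sum _ fun j hj => measurable_norm.comp (hH j hj))).inv
  have hbound : ∀ {c : Ω → ℝ} {ω}, |c ω| ≤ 1 + |V ω| + ∑ j ∈ A, |H j ω| → ‖(U * c) ω‖ ≤ 1 := by
    intro c ω hc
    rw [Pi.mul_apply, norm_mul, Real.norm_of_nonneg (hU0 ω).le, Real.norm_eq_abs]
    exact inv_mul_le_one_of_le₀ hc (by have := hsum ω; positivity)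
  have hUH1 : ∀ j ∈ A, ∀ ω, ‖(U * H j) ω‖ ≤ 1 := fun j hj ω => hbound <| by
    have := Finset.single_le_sum (f := fun j => |H j ω|) (fun _ _ => abs_nonneg _) hj
    linarith [abs_nonneg (V ω)]
  have hUH : ∀ j ∈ A, Measurable[G] (U * H j) := fun j hj => hU.mul (hH j hj)
  have hUHξ : ∀ j ∈ A, Integrable (U * H j * ξ j) Q := fun j hj =>
    (hξ j hj).bdd_mul (c := 1) ((hUH j hj).mono hG le_rfl).aestronglyMeasurable
      (ae_of_all _ (hUH1 j hj))
  have hsplit : U * (V + ∑ j ∈ A, H j * ξ j - V) = ∑ j ∈ A, U * H j * ξ j := by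
    rw [add_sub_cancel_left, Finset.mul_sum]
    simp only [mul_assoc]
  refine ⟨hV, U, hU, hU0, fun ω => inv_le_one_of_one_le₀ (by linarith [hsum ω, abs_nonneg (V ω)]),
    Integrable.of_bound ((hU.mul hV).mono hG le_rfl).aestronglyMeasurable 1
      (ae_of_all _ fun ω => hbound (by linarith [hsum ω])),
    hsplit ▸ integrable_finsetSum' _ hUHξ, ?_⟩
  rw [hsplit]
  refine (condExp_finsetSum hUHξ G).trans ?_
  have hterm : ∀ᵐ ω ∂Q, ∀ j ∈ A, Q[U * H j * ξ j | G] ω = 0 :=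
    (ae_ball_iff A.countable_toSet).2 fun j hj => by
      filter_upwards [condExp_mul_of_stronglyMeasurable_left (μ := Q)
        (hUH j hj).stronglyMeasurable (hUHξ j hj) (hξ j hj), hξ0 j hj] with ω hpull h0
      rw [hpull, Pi.mul_apply, h0, Pi.zero_apply, mul_zero]
  filter_upwards [hterm] with ω hω
  rw [Finset.sum_apply, Finset.sum_eq_zero hω, Pi.zero_apply]

end GeneralizedMartingales

section Gains

variable {J : ℕ} [m0 : MeasurableSpace Ω] {P Q : Measure Ω} {F : ℕ → MeasurableSpace Ω} {T : ℕ}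
  {A : Finset (Fin J)} {X : Fin J → ℕ → Ω → ℝ}

lemma condExp_increment_of_mem_martMeasures (hF : ∀ t, F t ≤ m0)
    (hX : ∀ j ∈ A, ∀ t, t ≤ T → Measurable[F t] (X j t)) (hQ : Q ∈ martMeasures P F T A X)
    {j : Fin J} (hj : j ∈ A) {t : ℕ} (ht : t < T) :
    Q[X j (t + 1) - X j t | F t] =ᵐ[Q] 0 := by
  obtain ⟨_, -, -, hmart⟩ := hQ
  obtain ⟨hint, hcond⟩ := hmart j hj
  filter_upwards [condExp_sub (hint (t + 1) ht) (hint t ht.le) (F t),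
    hcond t (t + 1) t.le_succ ht] with ω hsub hω
  rw [hsub, Pi.sub_apply, ← hω,
    condExp_of_stronglyMeasurable (hF t) (hX j hj t ht.le).stronglyMeasurable (hint t ht.le),
    sub_self, Pi.zero_apply]

theorem integrable_gain_of_neg_le (hFmono : Monotone F) (hF : ∀ t, F t ≤ m0)
    (hX : ∀ j ∈ A, ∀ t, t ≤ T → Measurable[F t] (X j t)) (hQ : Q ∈ martMeasures P F T A X)
    {k Z : Ω → ℝ} (hk : k ∈ gainsSet F T A X) (hZ : Integrable Z Q) (hle : -Z ≤ᵐ[Q] k) :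
    Integrable k Q ∧ ∫ ω, k ω ∂Q = 0 := by
  have : IsProbabilityMeasure Q := hQ.1
  obtain ⟨H, hH, rfl⟩ := hk
  let V : ℕ → Ω → ℝ := fun t =>
    ∑ s ∈ Finset.range t, ∑ j ∈ A, H j (s + 1) * (X j (s + 1) - X j s)
  have hgain : (fun ω => ∑ j ∈ A, ∑ s ∈ Finset.Icc 1 T, H j s ω * (X j s ω - X j (s - 1) ω))
      = V T := by
    funext ω
    simp only [V, Finset.sum_apply, Pi.mul_apply, Pi.sub_apply, Finset.sum_comm (s := A),
      ← Finset.Ico_add_one_right_eq_Icc, Finset.sum_Ico_eq_sum_range, Nat.add_sub_cancel,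
      add_comm 1]
  have hVm : ∀ t < T, Measurable[F t] (V t) := fun t ht => by
    simp only [V, Finset.sum_fn]
    refine Finset.measurable_sum _ fun s hs => Finset.measurable_sum _ fun j hj => ?_
    have hst : s + 1 ≤ t := Finset.mem_range.1 hs
    exact ((hH j hj (s + 1) (by omega) (by omega)).mono (hFmono (by omega)) le_rfl).mul
      (((hX j hj (s + 1) (by omega)).mono (hFmono hst) le_rfl).sub
        ((hX j hj s (by omega)).mono (hFmono (by omega)) le_rfl))
  have hV : ∀ t < T, IsGenMartingaleStep (F t) Q (V t) (V (t + 1)) := fun t ht => by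
    simp only [V, Finset.sum_range_succ]
    exact isGenMartingaleStep_add_sum (hF t) (hVm t ht) A
      (fun j hj => hH j hj (t + 1) (by omega) ht)
      (fun j hj => ((hQ.2.2.2 j hj).1 (t + 1) ht).sub ((hQ.2.2.2 j hj).1 t ht.le))
      (fun j hj => condExp_increment_of_mem_martMeasures hF hX hQ hj ht)
  rw [hgain] at hle ⊢
  obtain ⟨hint, heq⟩ :=
    integrable_of_forall_isGenMartingaleStep hF (by simp [V]) hV hZ hle
  exact ⟨hint, heq.trans (by simp [V])⟩

theorem NCA_of_mem_MeY {N : ℕ} {F : Fin N → ℕ → MeasurableSpace Ω}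
    (hFmono : ∀ i, Monotone (F i)) (hF : ∀ i t, F i t ≤ m0) {assets : Fin N → Finset (Fin J)}
    (hX : ∀ i, ∀ j ∈ assets i, ∀ t, t ≤ T → Measurable[F i t] (X j t))
    {Y : Set (Fin N → Ω → ℝ)} {Q : Fin N → Measure Ω} (hQ : Q ∈ MeY P F T assets X Y) :
    NCA P (fun i => gainsSet (F i) T (assets i) X) Y := by
  intro k y hy hk hnonneg i
  have hle : ∀ i, ∀ᵐ ω ∂Q i, 0 ≤ k i ω + y i ω := fun i => (hQ.1 i).2.1.ae_le (hnonneg i)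
  have hy_int : ∀ i, Integrable (y i) (Q i) := hQ.2.1 y hy
  have hgain : ∀ i, Integrable (k i) (Q i) ∧ ∫ ω, k i ω ∂Q i = 0 := fun i =>
    integrable_gain_of_neg_le (hFmono i) (hF i) (hX i) (hQ.1 i) (hk i) (hy_int i) <|
      (hle i).mono fun ω hω => neg_le_iff_add_nonneg.2 hω
  have hint : ∀ i, ∫ ω, (k i ω + y i ω) ∂Q i = ∫ ω, y i ω ∂Q i := fun i => by
    rw [integral_add (hgain i).1 (hy_int i), (hgain i).2, zero_add]
  have hint0 : ∀ i ∈ Finset.univ, 0 ≤ ∫ ω, (k i ω + y i ω) ∂Q i :=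
    fun i _ => integral_nonneg_of_ae (hle i)
  have hsum : ∑ i, ∫ ω, (k i ω + y i ω) ∂Q i = 0 :=
    le_antisymm (by simpa only [hint] using hQ.2.2 y hy) (Finset.sum_nonneg hint0)
  exact (hQ.1 i).2.2.1.ae_le ((integral_eq_zero_iff_of_nonneg_ae (hle i)
    ((hgain i).1.add (hy_int i))).1
    ((Finset.sum_eq_zero_iff_of_nonneg hint0).1 hsum i (Finset.mem_univ i)))

end Gains

section EquivalentMeasures

variable [MeasurableSpace Ω]

lemma exists_isProbabilityMeasure_of_density {μ : Measure Ω} [NeZero μ] {z : Ω → ℝ}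
    (hz : Integrable z μ) (hpos : ∀ᵐ ω ∂μ, 0 < z ω) :
    ∃ Q : Measure Ω, IsProbabilityMeasure Q ∧ Q ≪ μ ∧ μ ≪ Q ∧ ∀ g : Ω → ℝ,
      Integrable (fun ω => z ω * g ω) μ →
        Integrable g Q ∧ ∫ ω, g ω ∂Q = (∫ ω, z ω ∂μ)⁻¹ * ∫ ω, z ω * g ω ∂μ := by
  let f : Ω → ℝ := fun ω => Real.log (z ω)
  have hexp : (fun ω => Real.exp (f ω)) =ᵐ[μ] z := hpos.mono fun ω hω => Real.exp_log hω
  have hf : Integrable (fun ω => Real.exp (f ω)) μ := hz.congr hexp.symm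
  refine ⟨μ.tilted f, isProbabilityMeasure_tilted hf, tilted_absolutelyContinuous μ f,
    absolutelyContinuous_tilted hf, fun g hg => ⟨?_, ?_⟩⟩
  · refine (integrable_tilted_iff hf g).2 (hg.congr ?_)
    filter_upwards [hexp] with ω hω
    rw [hω, smul_eq_mul]
  · rw [integral_tilted, integral_congr_ae hexp, ← integral_const_mul]
    refine integral_congr_ae ?_
    filter_upwards [hexp] with ω hω
    rw [hω, smul_eq_mul, div_eq_inv_mul, mul_assoc]

lemma exists_isProbabilityMeasure_memLp_two (P : Measure Ω) [SFinite P] [NeZero P]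
    {S : Set (Ω → ℝ)} (hS : S.Finite) (hmeas : ∀ f ∈ S, Measurable f) :
    ∃ μ : Measure Ω, IsProbabilityMeasure μ ∧ μ ≪ P ∧ P ≪ μ ∧
      ∀ f ∈ Submodule.span ℝ S, MemLp f 2 μ := by
  lift S to Finset (Ω → ℝ) using hS
  let d : Ω → ℝ := fun ω => 1 + ∑ f ∈ S, f ω ^ 2
  have hsum : ∀ ω, 0 ≤ ∑ f ∈ S, f ω ^ 2 := fun ω => Finset.sum_nonneg fun f _ => sq_nonneg _
  have hd : ∀ ω, 0 < d ω := fun ω => by have := hsum ω; positivity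
  have hdm : Measurable d :=
    (Finset.measurable_sum S fun f hf => (hmeas f hf).pow_const 2).const_add 1
  have hbound : ∀ {c : ℝ} {ω}, 0 ≤ c → c ≤ d ω → ‖(d ω)⁻¹ * c‖ ≤ 1 := fun hc hcd => by
    rw [Real.norm_of_nonneg (mul_nonneg (inv_nonneg.2 (hd _).le) hc)]
    exact inv_mul_le_one_of_le₀ hcd (hd _).le
  have hint : Integrable (fun ω => (d ω)⁻¹) P.toFinite :=
    Integrable.of_bound hdm.inv.aestronglyMeasurable 1
      (ae_of_all _ fun ω => by simpa using hbound zero_le_one (by linarith [hsum ω]))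
  obtain ⟨μ, hμ, hμP, hPμ, hμint⟩ :=
    exists_isProbabilityMeasure_of_density hint (ae_of_all _ fun ω => inv_pos.2 (hd ω))
  refine ⟨μ, hμ, hμP.trans (toFinite_absolutelyContinuous P),
    (absolutelyContinuous_toFinite P).trans hPμ, fun f hf => ?_⟩
  induction hf using Submodule.span_induction with
  | zero => exact MemLp.zero
  | add f g _ _ hf hg => exact hf.add hg
  | smul c f _ hf => exact hf.const_smul c
  | mem f hf =>
    refine (memLp_two_iff_integrable_sq (hmeas f hf).aestronglyMeasurable).2 (hμint _ ?_).1
    refine Integrable.of_bound (hdm.inv.mul ((hmeas f hf).pow_const 2)).aestronglyMeasurable 1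
      (ae_of_all _ fun ω => hbound (sq_nonneg _) ?_)
    have := Finset.single_le_sum (f := fun f : Ω → ℝ => f ω ^ 2) (fun _ _ => sq_nonneg _) hf
    linarith

end EquivalentMeasures

section Martingales

variable {m0 : MeasurableSpace Ω} {Q : Measure Ω} [IsFiniteMeasure Q] {F : ℕ → MeasurableSpace Ω}
  {T : ℕ}

lemma ae_eq_condExp_of_setIntegral_increment_eq_zero (hFmono : Monotone F) (hF : ∀ t, F t ≤ m0)
    {x : ℕ → Ω → ℝ} (hx : ∀ t ≤ T, Measurable[F t] (x t)) (hint : ∀ t ≤ T, Integrable (x t) Q)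
    (hinc : ∀ n < T, ∀ A, MeasurableSet[F n] A → ∫ ω in A, (x (n + 1) - x n) ω ∂Q = 0)
    {s t : ℕ} (hst : s ≤ t) (ht : t ≤ T) : x s =ᵐ[Q] Q[x t | F s] := by
  refine ae_eq_condExp_of_forall_setIntegral_eq (hF s) (hint t ht)
    (fun A _ _ => (hint s (hst.trans ht)).integrableOn) (fun A hA _ => ?_)
    (hx s (hst.trans ht)).stronglyMeasurable.aestronglyMeasurable
  induction t, hst using Nat.le_induction with
  | base => rfl
  | succ n hn ih =>
    have h := hinc n ht A (hFmono hn _ hA)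
    rw [integral_sub' (hint _ ht).integrableOn (hint n (by omega)).integrableOn, sub_eq_zero] at h
    rw [ih (by omega), h]

end Martingales

section Slices

variable {ι : Type*}

/-- The σ-algebra on `ι × Ω` of the sets whose slice at each `i` belongs to `G i`. -/
abbrev sliceSpace (G : ι → MeasurableSpace Ω) : MeasurableSpace (ι × Ω) :=
  ⨅ i, (G i).map (Prod.mk i)

lemma measurable_sliceSpace_iff {G : ι → MeasurableSpace Ω} {f : ι × Ω → ℝ} :
    Measurable[sliceSpace G] f ↔ ∀ i, Measurable[G i] (Function.curry f i) :=
  ⟨fun h i _ hs => MeasurableSpace.measurableSet_iInf.1 (h hs) i,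
    fun h _ hs => MeasurableSpace.measurableSet_iInf.2 fun i => h i hs⟩

lemma sliceSpace_mono {F : ι → ℕ → MeasurableSpace Ω} (hF : ∀ i, Monotone (F i)) :
    Monotone fun n => sliceSpace fun i => F i n :=
  fun _ _ h => iInf_mono fun i => MeasurableSpace.map_mono (hF i h)

variable [MeasurableSpace ι] [MeasurableSpace Ω] {μ : Measure Ω} [SFinite μ]

lemma count_prod_eq_sum_map : Measure.count.prod μ =
    Measure.sum fun i : ι => μ.map (Prod.mk i) := by
  simp only [Measure.count, Measure.prod_sum_left, Measure.dirac_prod]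

lemma integral_count_prod [Fintype ι] [MeasurableSingletonClass ι] {f : ι × Ω → ℝ}
    (hf : Integrable f (Measure.count.prod μ)) :
    ∫ a, f a ∂Measure.count.prod μ = ∑ i, ∫ ω, f (i, ω) ∂μ := by
  rw [integral_prod f hf, integral_count]

variable [Finite ι] [MeasurableSingletonClass ι]

lemma ae_count_prod_iff {p : ι × Ω → Prop} :
    (∀ᵐ a ∂Measure.count.prod μ, p a) ↔ ∀ i, ∀ᵐ ω ∂μ, p (i, ω) := by
  rw [count_prod_eq_sum_map, Measure.ae_sum_iff]
  exact forall_congr' fun i => (measurableEmbedding_prodMk_left i).ae_map_iff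

lemma aestronglyMeasurable_count_prod_iff {f : ι × Ω → ℝ} :
    AEStronglyMeasurable f (Measure.count.prod μ) ↔
      ∀ i, AEStronglyMeasurable (Function.curry f i) μ := by
  rw [count_prod_eq_sum_map, aestronglyMeasurable_sum_measure_iff]
  exact forall_congr' fun i => (measurableEmbedding_prodMk_left i).aestronglyMeasurable_map_iff

lemma integrable_count_prod_iff {f : ι × Ω → ℝ} :
    Integrable f (Measure.count.prod μ) ↔ ∀ i, Integrable (Function.curry f i) μ := by
  rw [count_prod_eq_sum_map, integrable_sum_measure_iff, and_iff_left Summable.of_finite]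
  exact forall_congr' fun i => (measurableEmbedding_prodMk_left i).integrable_map_iff

lemma memLp_two_count_prod_iff {f : ι × Ω → ℝ} :
    MemLp f 2 (Measure.count.prod μ) ↔ ∀ i, MemLp (Function.curry f i) 2 μ := by
  refine ⟨fun h i => ?_, fun h => ?_⟩
  · rw [memLp_two_iff_integrable_sq (aestronglyMeasurable_count_prod_iff.1 h.1 i)]
    exact integrable_count_prod_iff.1 ((memLp_two_iff_integrable_sq h.1).1 h) i
  · rw [memLp_two_iff_integrable_sq (aestronglyMeasurable_count_prod_iff.2 fun i => (h i).1)]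
    exact integrable_count_prod_iff.2 fun i => (memLp_two_iff_integrable_sq (h i).1).1 (h i)

end Slices

section CollectiveGains

variable {J N : ℕ}

lemma mul_increment_mem_gainsSet {F : ℕ → MeasurableSpace Ω} {T : ℕ} {A : Finset (Fin J)}
    {X : Fin J → ℕ → Ω → ℝ} {n : ℕ} (hn : n < T) {j : Fin J} (hj : j ∈ A) {h : Ω → ℝ}
    (hh : Measurable[F n] h) : h * (X j (n + 1) - X j n) ∈ gainsSet F T A X := by
  classical
  refine ⟨fun j' s => if s = n + 1 ∧ j' = j then h else 0, fun j' _ s _ _ => ?_, ?_⟩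
  · dsimp only
    split_ifs with hs
    · obtain ⟨rfl, -⟩ := hs
      exact hh
    · exact measurable_const
  · funext ω
    simp [ite_and, ite_apply, ite_mul, Finset.sum_ite_eq', hj, hn]

/-- `gainsSet`, as a linear subspace. -/
def gainsSubmodule (F : ℕ → MeasurableSpace Ω) (T : ℕ) (A : Finset (Fin J))
    (X : Fin J → ℕ → Ω → ℝ) : Submodule ℝ (Ω → ℝ) where
  carrier := gainsSet F T A X
  zero_mem' := ⟨0, fun _ _ _ _ _ => measurable_const, by simp [Pi.zero_def]⟩
  add_mem' := by
    rintro _ _ ⟨H, hH, rfl⟩ ⟨H', hH', rfl⟩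
    refine ⟨H + H', fun j hj s h₁ h₂ => (hH j hj s h₁ h₂).add (hH' j hj s h₁ h₂), ?_⟩
    funext ω
    simp only [Pi.add_apply, add_mul, Finset.sum_add_distrib]
  smul_mem' := by
    rintro c _ ⟨H, hH, rfl⟩
    refine ⟨c • H, fun j hj s h₁ h₂ => (hH j hj s h₁ h₂).const_smul c, ?_⟩
    funext ω
    simp only [Pi.smul_apply, smul_eq_mul, mul_assoc, Finset.mul_sum]

/-- The price increment of asset `j` after date `n`, as a claim on `Fin N × Ω` paying only on the
slices of the agents who trade `j`. -/
def agentIncrement (assets : Fin N → Finset (Fin J)) (X : Fin J → ℕ → Ω → ℝ) (n : ℕ) (j : Fin J)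
    (a : Fin N × Ω) : ℝ :=
  if j ∈ assets a.1 then X j (n + 1) a.2 - X j n a.2 else 0

/-- The space `K₁ × ⋯ × K_N + 𝒴`, read on `Fin N × Ω` as the gains of a single agent whose
information is given slicewise by the filtrations `F i`. -/
def collectiveGains (F : Fin N → ℕ → MeasurableSpace Ω) (T : ℕ) (assets : Fin N → Finset (Fin J))
    (X : Fin J → ℕ → Ω → ℝ) (Y : Submodule ℝ (Fin N → Ω → ℝ)) : Submodule ℝ (Fin N × Ω → ℝ) :=
  (⨆ p ∈ Finset.range T ×ˢ (Finset.univ : Finset (Fin J)),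
    multiples (sliceSpace fun i => F i p.1) (agentIncrement assets X p.1 p.2)) ⊔
  Y.map (LinearEquiv.curry ℝ ℝ (Fin N) Ω).symm.toLinearMap

variable {F : Fin N → ℕ → MeasurableSpace Ω} {T : ℕ} {assets : Fin N → Finset (Fin J)}
  {X : Fin J → ℕ → Ω → ℝ} {Y : Submodule ℝ (Fin N → Ω → ℝ)}

lemma uncurry_mem_collectiveGains {y : Fin N → Ω → ℝ} (hy : y ∈ Y) :
    Function.uncurry y ∈ collectiveGains F T assets X Y :=
  Submodule.mem_sup_right (Submodule.mem_map_of_mem hy)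

lemma uncurry_single_increment_mem_collectiveGains {i : Fin N} {j : Fin J} (hj : j ∈ assets i)
    {n : ℕ} (hn : n < T) {h : Ω → ℝ} (hh : Measurable[F i n] h) :
    Function.uncurry (Pi.single i (h * (X j (n + 1) - X j n))) ∈
      collectiveGains F T assets X Y := by
  refine Submodule.mem_sup_left (Submodule.mem_iSup_of_mem (n, j) <|
    Submodule.mem_iSup_of_mem (by simp [hn]) ⟨Function.uncurry (Pi.single i h), ?_, ?_⟩)
  · refine measurable_sliceSpace_iff.2 fun b => ?_
    rw [Function.curry_uncurry]
    obtain rfl | hb := eq_or_ne b i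
    · rwa [Pi.single_eq_same]
    · rw [Pi.single_eq_of_ne hb]
      exact measurable_const
  · funext ⟨b, ω⟩
    obtain rfl | hb := eq_or_ne b i
    · simp [agentIncrement, hj]
    · simp [hb]

lemma exists_gains_add_exchange {m : Fin N × Ω → ℝ} (hm : m ∈ collectiveGains F T assets X Y) :
    ∃ k, (∀ i, k i ∈ gainsSet (F i) T (assets i) X) ∧ ∃ y ∈ Y, m = Function.uncurry (k + y) := by
  have hle : (⨆ p ∈ Finset.range T ×ˢ (Finset.univ : Finset (Fin J)),
      multiples (sliceSpace fun i => F i p.1) (agentIncrement assets X p.1 p.2)) ≤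
      (Submodule.pi Set.univ fun i => gainsSubmodule (F i) T (assets i) X).map
        (LinearEquiv.curry ℝ ℝ (Fin N) Ω).symm.toLinearMap := by
    refine iSup₂_le ?_
    rintro ⟨n, j⟩ hp _ ⟨H, hH, rfl⟩
    have hn : n < T := by simpa using hp
    refine ⟨Function.curry (H * agentIncrement assets X n j), fun i _ => ?_,
      Function.uncurry_curry _⟩
    have hHi := measurable_sliceSpace_iff.1 hH i
    by_cases hj : j ∈ assets i
    · have heq : Function.curry (H * agentIncrement assets X n j) i =
          Function.curry H i * (X j (n + 1) - X j n) := by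
        funext ω
        simp [agentIncrement, hj]
      exact heq ▸ mul_increment_mem_gainsSet hn hj hHi
    · have heq : Function.curry (H * agentIncrement assets X n j) i = 0 := by
        funext ω
        simp [agentIncrement, hj]
      exact heq ▸ (gainsSubmodule (F i) T (assets i) X).zero_mem
  obtain ⟨g, hg, _, ⟨y, hy, rfl⟩, rfl⟩ := Submodule.mem_sup.1 hm
  obtain ⟨k, hk, rfl⟩ := hle hg
  exact ⟨k, fun i => hk i trivial, y, hy, rfl⟩

variable [MeasurableSpace Ω] {P μ : Measure Ω}

lemma aeClosed_collectiveGains [FiniteDimensional ℝ Y] (hF : ∀ i, Monotone (F i))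
    (hna : NoArb (Measure.count.prod μ) (collectiveGains F T assets X Y)) :
    AEClosed (Measure.count.prod μ)
      (acceptable (Measure.count.prod μ) (collectiveGains F T assets X Y)) :=
  aeClosed_acceptable_sup_of_fg
    (aeClosed_acceptable_biSup_multiples _ Prod.fst (sliceSpace_mono hF) _ (hna.mono le_sup_left))
    ((Module.Finite.iff_fg.1 ‹_›).map _) hna

lemma noArb_collectiveGains [SFinite μ] (hPμ : P ≪ μ) (hμP : μ ≪ P)
    (h : NCA P (fun i => gainsSet (F i) T (assets i) X) Y) :
    NoArb (Measure.count.prod μ) (collectiveGains F T assets X Y) := by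
  intro m hm hm0
  obtain ⟨k, hk, y, hy, rfl⟩ := exists_gains_add_exchange hm
  exact ae_count_prod_iff.2 fun i =>
    hμP.ae_le (h k y hy hk (fun i => hPμ.ae_le (ae_count_prod_iff.1 hm0 i)) i)

/-- `z` is a collective state price density: the positive square-integrable weights `z i` price
every square-integrable element of `K₁ × ⋯ × K_N + 𝒴` at zero. -/
structure IsStatePriceDensity (μ : Measure Ω) (F : Fin N → ℕ → MeasurableSpace Ω) (T : ℕ)
    (assets : Fin N → Finset (Fin J)) (X : Fin J → ℕ → Ω → ℝ) (Y : Submodule ℝ (Fin N → Ω → ℝ))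
    (z : Fin N → Ω → ℝ) : Prop where
  memLp (i : Fin N) : MemLp (z i) 2 μ
  pos (i : Fin N) : ∀ᵐ ω ∂μ, 0 < z i ω
  sum_integral_eq_zero {f : Fin N → Ω → ℝ} :
    Function.uncurry f ∈ collectiveGains F T assets X Y → (∀ i, MemLp (f i) 2 μ) →
      ∑ i, ∫ ω, z i ω * f i ω ∂μ = 0

lemma exists_isStatePriceDensity [IsFiniteMeasure μ] [FiniteDimensional ℝ Y]
    (hF : ∀ i, Monotone (F i)) (hPμ : P ≪ μ) (hμP : μ ≪ P)
    (h : NCA P (fun i => gainsSet (F i) T (assets i) X) Y) :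
    ∃ z, IsStatePriceDensity μ F T assets X Y z := by
  have hna := noArb_collectiveGains hPμ hμP h
  obtain ⟨z, hz2, hz0, hz⟩ := exists_pos_annihilator (aeClosed_collectiveGains hF hna) hna
  refine ⟨Function.curry z, memLp_two_count_prod_iff.1 hz2, ae_count_prod_iff.1 hz0,
    fun {f} hf hf2 => ?_⟩
  have hf2' : MemLp (Function.uncurry f) 2 (Measure.count.prod μ) :=
    memLp_two_count_prod_iff.2 hf2
  exact (integral_count_prod (hz2.integrable_mul hf2')).symm.trans (hz _ hf hf2')

end CollectiveGains

section StatePriceDensity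

variable {J N : ℕ} [m0 : MeasurableSpace Ω] {P μ : Measure Ω} {F : Fin N → ℕ → MeasurableSpace Ω}
  {T : ℕ} {assets : Fin N → Finset (Fin J)} {X : Fin J → ℕ → Ω → ℝ}
  {Y : Submodule ℝ (Fin N → Ω → ℝ)} {z : Fin N → Ω → ℝ}

namespace IsStatePriceDensity

lemma setIntegral_increment_eq_zero (hz : IsStatePriceDensity μ F T assets X Y z) {i : Fin N}
    {j : Fin J} (hj : j ∈ assets i) {n : ℕ} (hn : n < T) (hF : F i n ≤ m0)
    (hX : MemLp (X j (n + 1) - X j n) 2 μ) {A : Set Ω} (hA : MeasurableSet[F i n] A) :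
    ∫ ω, z i ω * A.indicator (X j (n + 1) - X j n) ω ∂μ = 0 := by
  have hmul : A.indicator 1 * (X j (n + 1) - X j n) = A.indicator (X j (n + 1) - X j n) := by
    funext ω
    by_cases hω : ω ∈ A <;> simp [hω]
  have hmem := uncurry_single_increment_mem_collectiveGains (F := F) (X := X) (Y := Y) hj hn
    (h := A.indicator 1) (measurable_const.indicator hA)
  rw [hmul] at hmem
  have hsum := hz.sum_integral_eq_zero hmem fun b => by
    obtain rfl | hb := eq_or_ne b i
    · rw [Pi.single_eq_same]
      exact hX.indicator (hF _ hA)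
    · rw [Pi.single_eq_of_ne hb]
      exact MemLp.zero
  rwa [Finset.sum_eq_single i (fun b _ hb => by simp [Pi.single_eq_of_ne hb]) (by simp),
    Pi.single_eq_same] at hsum

lemma integral_eq [IsFiniteMeasure μ] (hz : IsStatePriceDensity μ F T assets X Y z)
    (hY0 : zeroSum Ω N ⊆ Y) (a b : Fin N) : ∫ ω, z a ω ∂μ = ∫ ω, z b ω ∂μ := by
  have hmem : (fun i _ => (Pi.single a 1 - Pi.single b 1 : Fin N → ℝ) i : Fin N → Ω → ℝ) ∈ Y :=
    hY0 ⟨Pi.single a 1 - Pi.single b 1, by simp, fun _ => rfl⟩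
  have hsum := hz.sum_integral_eq_zero (uncurry_mem_collectiveGains hmem)
    fun i => memLp_const _
  simp only [integral_mul_const] at hsum
  simpa [mul_sub, Pi.single_apply, sub_eq_zero] using hsum

lemma MeY_nonempty [IsFiniteMeasure μ] [NeZero μ] (hz : IsStatePriceDensity μ F T assets X Y z)
    (hPμ : P ≪ μ) (hμP : μ ≪ P) (hFmono : ∀ i, Monotone (F i)) (hF : ∀ i t, F i t ≤ m0)
    (hX : ∀ i, ∀ j ∈ assets i, ∀ t, t ≤ T → Measurable[F i t] (X j t))
    (hX2 : ∀ i, ∀ j ∈ assets i, ∀ t ≤ T, MemLp (X j t) 2 μ)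
    (hY0 : zeroSum Ω N ⊆ Y) (hY2 : ∀ y ∈ Y, ∀ i, MemLp (y i) 2 μ) :
    (MeY P F T assets X Y).Nonempty := by
  choose Q hQprob hQμ hμQ hQ using fun i =>
    exists_isProbabilityMeasure_of_density ((hz.memLp i).integrable one_le_two) (hz.pos i)
  have hQ2 i {g : Ω → ℝ} (hg : MemLp g 2 μ) := hQ i g ((hz.memLp i).integrable_mul hg)
  refine ⟨Q, fun i => ⟨hQprob i, (hQμ i).trans hμP, hPμ.trans (hμQ i), fun j hj =>
    ⟨fun t ht => (hQ2 i (hX2 i j hj t ht)).1, fun s t hst ht => ?_⟩⟩,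
    fun y hy i => (hQ2 i (hY2 y hy i)).1, fun y hy => ?_⟩
  · refine ae_eq_condExp_of_setIntegral_increment_eq_zero (hFmono i) (hF i) (hX i j hj)
      (fun t ht => (hQ2 i (hX2 i j hj t ht)).1) (fun n hn A hA => ?_) hst ht
    have hinc := (hX2 i j hj (n + 1) hn).sub (hX2 i j hj n hn.le)
    rw [← integral_indicator (hF i n _ hA), (hQ2 i (hinc.indicator (hF i n _ hA))).2,
      hz.setIntegral_increment_eq_zero hj hn (hF i n) hinc hA, mul_zero]
  · obtain hN | ⟨⟨a⟩⟩ := isEmpty_or_nonempty (Fin N)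
    · simp
    · refine le_of_eq ?_
      calc ∑ i, ∫ ω, y i ω ∂Q i
          = (∫ ω, z a ω ∂μ)⁻¹ * ∑ i, ∫ ω, z i ω * y i ω ∂μ := by
            simp only [fun i => (hQ2 i (hY2 y hy i)).2, fun i => hz.integral_eq hY0 i a,
              Finset.mul_sum]
        _ = 0 := by
            rw [hz.sum_integral_eq_zero (uncurry_mem_collectiveGains hy) (hY2 y hy), mul_zero]

end IsStatePriceDensity

lemma exists_isProbabilityMeasure_memLp_two_prices_exchanges (P : Measure Ω) [SFinite P]
    [NeZero P] [FiniteDimensional ℝ Y]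
    (hX : ∀ i, ∀ j ∈ assets i, ∀ t ≤ T, Measurable (X j t))
    (hY : ∀ y ∈ Y, ∀ i, Measurable (y i)) :
    ∃ μ : Measure Ω, IsProbabilityMeasure μ ∧ μ ≪ P ∧ P ≪ μ ∧
      (∀ i, ∀ j ∈ assets i, ∀ t ≤ T, MemLp (X j t) 2 μ) ∧ ∀ y ∈ Y, ∀ i, MemLp (y i) 2 μ := by
  obtain ⟨s, rfl⟩ : Y.FG := Module.Finite.iff_fg.1 ‹_›
  set prices : Set (Ω → ℝ) := {f | ∃ i, ∃ j ∈ assets i, ∃ t ≤ T, X j t = f}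
  set exchanges : Set (Ω → ℝ) := ⋃ i, (fun y : Fin N → Ω → ℝ => y i) '' s
  have hprices : prices.Finite :=
    (Set.Finite.image2 X Set.finite_univ (Set.finite_Iic T)).subset <| by
      rintro _ ⟨_, j, -, t, ht, rfl⟩
      exact ⟨j, trivial, t, ht, rfl⟩
  have hexchanges : exchanges.Finite := Set.finite_iUnion fun _ => s.finite_toSet.image _
  obtain ⟨μ, hμ, hμP, hPμ, hμ2⟩ :=
    exists_isProbabilityMeasure_memLp_two P (hprices.union hexchanges) <| by
      rintro _ (⟨i, j, hj, t, ht, rfl⟩ | hf)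
      · exact hX i j hj t ht
      · obtain ⟨i, y, hy, rfl⟩ := Set.mem_iUnion.1 hf
        exact hY y (Submodule.subset_span hy) i
  refine ⟨μ, hμ, hμP, hPμ, fun i j hj t ht =>
    hμ2 _ (Submodule.subset_span (.inl ⟨i, j, hj, t, ht, rfl⟩)), fun y hy i => hμ2 _ ?_⟩
  refine Submodule.span_mono (Set.subset_union_right.trans' (Set.subset_iUnion _ i)) ?_
  have hmap := Submodule.map_span (LinearMap.proj i : (Fin N → Ω → ℝ) →ₗ[ℝ] Ω → ℝ) s
  exact hmap ▸ Submodule.mem_map_of_mem hy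

lemma MeY_nonempty_of_NCA [SFinite P] [NeZero P] [FiniteDimensional ℝ Y]
    (hFmono : ∀ i, Monotone (F i)) (hF : ∀ i t, F i t ≤ m0)
    (hX : ∀ i, ∀ j ∈ assets i, ∀ t, t ≤ T → Measurable[F i t] (X j t))
    (hY0 : zeroSum Ω N ⊆ Y) (hY : ∀ y ∈ Y, ∀ i, Measurable (y i))
    (h : NCA P (fun i => gainsSet (F i) T (assets i) X) Y) :
    (MeY P F T assets X Y).Nonempty := by
  obtain ⟨μ, hμ, hμP, hPμ, hX2, hY2⟩ := exists_isProbabilityMeasure_memLp_two_prices_exchanges P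
    (fun i j hj t ht => (hX i j hj t ht).mono (hF i t) le_rfl) hY
  obtain ⟨z, hz⟩ := exists_isStatePriceDensity hFmono hPμ hμP h
  exact hz.MeY_nonempty hPμ hμP hFmono hF hX hX2 hY0 hY2

end StatePriceDensity

theorem collective_FTAP_I_finDim_general {J N : ℕ} [m0 : MeasurableSpace Ω] (P : Measure Ω)
    [SFinite P] [NeZero P] {F : Fin N → ℕ → MeasurableSpace Ω} (hFmono : ∀ i, Monotone (F i))
    (hF : ∀ i t, F i t ≤ m0) {T : ℕ} {assets : Fin N → Finset (Fin J)} {X : Fin J → ℕ → Ω → ℝ}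
    (hX : ∀ i, ∀ j ∈ assets i, ∀ t, t ≤ T → Measurable[F i t] (X j t))
    {Y : Submodule ℝ (Fin N → Ω → ℝ)} [FiniteDimensional ℝ Y] (hY0 : zeroSum Ω N ⊆ Y)
    (hY : ∀ y ∈ Y, ∀ i, Measurable (y i)) :
    NCA P (fun i => gainsSet (F i) T (assets i) X) Y ↔ (MeY P F T assets X Y).Nonempty :=
  ⟨MeY_nonempty_of_NCA hFmono hF hX hY0 hY,
    fun ⟨_, hQ⟩ => NCA_of_mem_MeY hFmono hF hX hQ⟩

section ExchangeSpan

variable {N R : ℕ} (Ys : Fin R → Fin N → Ω → ℝ)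

/-- The exchange with constant part `x` and coefficients `c` along `Ys`, as a linear function of
`(x, c)`. -/
def exchangeMap : (Fin N → ℝ) × (Fin R → ℝ) →ₗ[ℝ] Fin N → Ω → ℝ where
  toFun p i ω := p.1 i + ∑ r, p.2 r * Ys r i ω
  map_add' p q := by
    ext i ω
    simp only [Prod.fst_add, Prod.snd_add, Pi.add_apply, add_mul, Finset.sum_add_distrib]
    ring
  map_smul' a p := by
    ext i ω
    simp [mul_add, mul_assoc, Finset.mul_sum]

/-- `spanExch Ys`, as a linear subspace. -/
def exchangeSubmodule : Submodule ℝ (Fin N → Ω → ℝ) :=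
  (LinearMap.ker ((∑ i, LinearMap.proj i) ∘ₗ LinearMap.fst ℝ (Fin N → ℝ) (Fin R → ℝ))).map
    (exchangeMap Ys)

instance : FiniteDimensional ℝ (exchangeSubmodule Ys) := by
  unfold exchangeSubmodule
  infer_instance

lemma coe_exchangeSubmodule : (exchangeSubmodule Ys : Set (Fin N → Ω → ℝ)) = spanExch Ys := by
  ext y
  constructor
  · rintro ⟨⟨x, c⟩, hx, rfl⟩
    exact ⟨x, c, by simpa using hx, fun _ => rfl⟩
  · rintro ⟨x, c, hx, hy⟩
    exact ⟨(x, c), by simpa using hx, funext fun i => (hy i).symm⟩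

lemma zeroSum_subset_spanExch : zeroSum Ω N ⊆ spanExch Ys := by
  rintro y ⟨x, hx, hy⟩
  exact ⟨x, 0, hx, fun i => by simp [hy i]⟩

variable {Ys}

lemma measurable_of_mem_spanExch [MeasurableSpace Ω] (hYs : ∀ r i, Measurable (Ys r i))
    {y : Fin N → Ω → ℝ} (hy : y ∈ spanExch Ys) (i : Fin N) : Measurable (y i) := by
  obtain ⟨x, c, -, hy⟩ := hy
  rw [hy i]
  exact measurable_const.add (Finset.measurable_fun_sum _ fun r _ => (hYs r i).const_mul _)

end ExchangeSpan

/-- collective FTAP I for finite-dimensional exchange spaces. -/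
theorem collective_FTAP_I_finDim
    {Ω : Type*} [m0 : MeasurableSpace Ω]
    (P : Measure Ω) [IsProbabilityMeasure P]
    (T J N : ℕ) (hT : 1 ≤ T) (hJ : 1 ≤ J) (hN : 1 ≤ N)
    (F : Fin N → ℕ → MeasurableSpace Ω)
    (hFmono : ∀ i, Monotone (F i))
    (hFle : ∀ i t, F i t ≤ m0)
    (hFzero : ∀ i, ∀ A : Set Ω, MeasurableSet[F i 0] A → P A = 0 ∨ P A = 1)
    (X : Fin J → ℕ → Ω → ℝ)
    (assets : Fin N → Finset (Fin J))
    (hassets : ∀ i, (assets i).Nonempty)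
    (hcover : ∀ j, ∃ i, j ∈ assets i)
    (hadapted : ∀ i, ∀ j ∈ assets i, ∀ t, t ≤ T → Measurable[F i t] (X j t))
    (R : ℕ) (Ys : Fin R → Fin N → Ω → ℝ)
    (hYsmeas : ∀ r i, Measurable[F i T] (Ys r i)) :
    NCA P (fun i => gainsSet (F i) T (assets i) X) (spanExch Ys) ↔
      (MeY P F T assets X (spanExch Ys)).Nonempty := by
  rw [← coe_exchangeSubmodule]
  exact collective_FTAP_I_finDim_general P hFmono hFle hadapted
    (coe_exchangeSubmodule Ys ▸ zeroSum_subset_spanExch Ys) fun y hy =>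
      measurable_of_mem_spanExch (fun r i => (hYsmeas r i).mono (hFle i T) le_rfl)
        (coe_exchangeSubmodule Ys ▸ hy)

end CollectiveArb
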